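/- arXiv:1210.7391 — 2 statements merged into one kernel-verified Lean document; each statement's English description precedes it below -/
import Mathlib

section
/- Let p, q ∈ V with p·p ≠ 0, let D := (p·p)(q·q) − (p·q)² and assume D > 0, let τ := ((p·q) + i·√D)/(p·p) ∈ ℂ and Ω := q − conj(τ)·p ∈ V ⊗ ℂ. Set c := −i·(p·p)/(2√D) ∈ ℂ. Then p = c·Ω + conj(c)·conj(Ω) and q = c·τ·Ω + conj(c·τ)·conj(Ω). (Consequently the charge γ = p dx + q dy is a ℂ-linear combination of Ω^{3,0} = (dx + τ dy) ∧ Ω and its conjugate, i.e. γ has Hodge type (3,0) + (0,3): the attractor equation holds.) -/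
/- STATEMENT 2: With τ = (p·q + i√D)/(p·p), Ω = q − conj(τ)·p and
c = −i(p·p)/(2√D), one has p = c·Ω + conj(c)·conj(Ω) and
q = c·τ·Ω + conj(c·τ)·conj(Ω); hence the charge γ = p dx + q dy has Hodge
type (3,0)+(0,3): the attractor equation holds.
We model the complexification V ⊗ ℂ as pairs (re, im) ∈ V × V. -/

noncomputable section

variable {V : Type*}

/-- Inclusion of `V` into its complexification `V × V`. -/
def toC [AddCommGroup V] [Module ℝ V] (v : V) : V × V := (v, 0)

/-- Coordinatewise complex conjugation on the complexification. -/
def conjC [AddCommGroup V] [Module ℝ V] (z : V × V) : V × V := (z.1, -z.2)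

/-- Scalar multiplication by a complex number on the complexification. -/
def csmul [AddCommGroup V] [Module ℝ V] (c : ℂ) (z : V × V) : V × V :=
  (c.re • z.1 - c.im • z.2, c.re • z.2 + c.im • z.1)

/-!
Subtracting `conj Ω = q - τ p` from `Ω = q - conj τ p` eliminates `q` and gives
`Ω - conj Ω = (τ - conj τ) p`; weighting the two by `τ` and `conj τ` eliminates `p` and gives
`τ Ω - conj τ conj Ω = (τ - conj τ) q`. Both decompositions follow on dividing by `τ - conj τ`,
which is nonzero for every non-real `τ`. The attractor value of `τ` has `τ - conj τ = 2i√D / p²`,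
whose inverse is `c`; since this is purely imaginary, `conj c = -c`.
-/

section

open scoped ComplexConjugate

variable [AddCommGroup V] [Module ℝ V]

theorem one_csmul (z : V × V) : csmul 1 z = z := by
  simp [csmul]

theorem csmul_csmul (a c : ℂ) (z : V × V) : csmul a (csmul c z) = csmul (a * c) z := by
  ext <;> simp only [csmul, Complex.mul_re, Complex.mul_im] <;> module

theorem csmul_sub (c : ℂ) (z w : V × V) : csmul c (z - w) = csmul c z - csmul c w := by
  ext <;> simp only [csmul, Prod.fst_sub, Prod.snd_sub] <;> module

theorem sub_csmul (a c : ℂ) (z : V × V) : csmul (a - c) z = csmul a z - csmul c z := by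
  ext <;> simp only [csmul, Complex.sub_re, Complex.sub_im, Prod.fst_sub, Prod.snd_sub] <;> module

theorem neg_csmul (c : ℂ) (z : V × V) : csmul (-c) z = -csmul c z := by
  ext <;> simp only [csmul, Complex.neg_re, Complex.neg_im, Prod.fst_neg, Prod.snd_neg] <;> module

theorem inv_csmul_csmul {c : ℂ} (hc : c ≠ 0) (z : V × V) : csmul c⁻¹ (csmul c z) = z := by
  rw [csmul_csmul, inv_mul_cancel₀ hc, one_csmul]

theorem conjC_toC (v : V) : conjC (toC v) = toC v := by
  simp [conjC, toC]

theorem conjC_sub (z w : V × V) : conjC (z - w) = conjC z - conjC w :=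
  Prod.ext rfl (neg_sub' z.2 w.2)

theorem conjC_csmul (c : ℂ) (z : V × V) : conjC (csmul c z) = csmul (conj c) (conjC z) := by
  ext <;> simp only [conjC, csmul, Complex.conj_re, Complex.conj_im] <;> module

/-- The period vector `Ω = q - conj τ p` attached to the charge `p dx + q dy` and the complex
structure `τ` of the torus, as an element of the complexification of `V`. -/
def period (τ : ℂ) (p q : V) : V × V := toC q - csmul (conj τ) (toC p)

theorem conjC_period (τ : ℂ) (p q : V) : conjC (period τ p q) = toC q - csmul τ (toC p) := by
  rw [period, conjC_sub, conjC_csmul, conjC_toC, conjC_toC, Complex.conj_conj]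

theorem period_sub_conjC_period (τ : ℂ) (p q : V) :
    period τ p q - conjC (period τ p q) = csmul (τ - conj τ) (toC p) := by
  rw [conjC_period, period, sub_csmul, sub_sub_sub_cancel_left]

theorem csmul_period_sub_csmul_conjC_period (τ : ℂ) (p q : V) :
    csmul τ (period τ p q) - csmul (conj τ) (conjC (period τ p q)) =
      csmul (τ - conj τ) (toC q) := by
  rw [conjC_period, period, csmul_sub, csmul_sub, csmul_csmul, csmul_csmul, mul_comm (conj τ) τ,
    sub_sub_sub_cancel_right, sub_csmul]

theorem sub_conj_ne_zero {τ : ℂ} (hτ : τ.im ≠ 0) : τ - conj τ ≠ 0 :=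
  sub_ne_zero.mpr fun h => hτ (Complex.conj_eq_iff_im.mp h.symm)

theorem conj_inv_sub_conj (τ : ℂ) : conj (τ - conj τ)⁻¹ = -(τ - conj τ)⁻¹ := by
  rw [map_inv₀, map_sub, Complex.conj_conj, ← neg_sub, inv_neg]

theorem attractor_equation_holds_general {τ : ℂ} (hτ : τ.im ≠ 0) (p q : V)
    {c : ℂ} (hc : c = (τ - conj τ)⁻¹) :
    toC p = csmul c (period τ p q) + csmul (conj c) (conjC (period τ p q)) ∧
    toC q = csmul (c * τ) (period τ p q) + csmul (conj (c * τ)) (conjC (period τ p q)) := by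
  have conj_c : conj c = -c := hc ▸ conj_inv_sub_conj τ
  have cancel (v : V) : csmul c (csmul (τ - conj τ) (toC v)) = toC v :=
    hc ▸ inv_csmul_csmul (sub_conj_ne_zero hτ) (toC v)
  constructor
  · rw [conj_c, neg_csmul, ← sub_eq_add_neg, ← csmul_sub, period_sub_conjC_period, cancel]
  · rw [map_mul, conj_c, ← csmul_csmul, ← csmul_csmul, neg_csmul, ← sub_eq_add_neg, ← csmul_sub,
      csmul_period_sub_csmul_conjC_period, cancel]

theorem im_add_I_mul_div (m s r : ℝ) : (((m : ℂ) + Complex.I * s) / r).im = s / r := by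
  simp [Complex.div_ofReal_im]

theorem inv_sub_conj_add_I_mul_div (m s r : ℝ) :
    (((m : ℂ) + Complex.I * s) / r - conj (((m : ℂ) + Complex.I * s) / r))⁻¹ =
      -Complex.I * r / (2 * s) := by
  rw [Complex.sub_conj, im_add_I_mul_div]
  simp only [Complex.ofReal_mul, Complex.ofReal_div, Complex.ofReal_ofNat, mul_inv, inv_div,
    Complex.inv_I]
  ring

end

theorem attractor_equation_holds
    [AddCommGroup V] [Module ℝ V]
    (b : LinearMap.BilinForm ℝ V) (hsymm : ∀ x y : V, b x y = b y x)
    (p q : V) (hpp : b p p ≠ 0)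
    (D : ℝ) (hD : D = b p p * b q q - b p q * b p q) (hDpos : 0 < D)
    (τ : ℂ) (hτ : τ = ((b p q : ℂ) + Complex.I * (Real.sqrt D : ℂ)) / ((b p p : ℝ) : ℂ))
    (Ω : V × V) (hΩ : Ω = toC q - csmul (starRingEnd ℂ τ) (toC p))
    (c : ℂ) (hc : c = -Complex.I * ((b p p : ℝ) : ℂ) / (2 * (Real.sqrt D : ℂ))) :
    toC p = csmul c Ω + csmul (starRingEnd ℂ c) (conjC Ω) ∧
    toC q = csmul (c * τ) Ω + csmul (starRingEnd ℂ (c * τ)) (conjC Ω) := by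
  have im_ne_zero : τ.im ≠ 0 := by
    simpa only [hτ, im_add_I_mul_div] using div_ne_zero (Real.sqrt_ne_zero'.mpr hDpos) hpp
  have c_eq : c = (τ - starRingEnd ℂ τ)⁻¹ := by rw [hc, hτ, inv_sub_conj_add_I_mul_div]
  exact hΩ ▸ attractor_equation_holds_general im_ne_zero p q c_eq

end
end

section
/- Let p, q, f, σ₀, ω′, B ∈ V, a, b, t ∈ ℝ, and set ω_J := ω′ + a·f + b·σ₀. Assume: f·f = 0, f·σ₀ = 1, σ₀·σ₀ = −2, f·p = f·q = σ₀·p = σ₀·q = 0, ω′·f = ω′·σ₀ = 0, ω_J·p = ω_J·q = 0, and ω_J·f ≠ 0. Define ω̌ := (1/(ω_J·f))·(q − t·p − ((q − t·p)·B)·f) and B̌ := (1/(ω_J·f))·(ω′ − (ω_J·B)·f). Then B̌·ω̌ = 0. Consequently (exp(B̌ + iω̌), (1, 0, 1)) = −1 − ½(B̌·B̌ − ω̌·ω̌) is a real number, and (exp(B̌ + iω̌), (0, 0, −1)) = 1. -/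
/- STATEMENT 11 (case l ∈ U′ of Theorem 6.2): with mirror data
ω̌ = (1/(ω_J·f))(q − tp − ((q − tp)·B)f) and B̌ = (1/(ω_J·f))(ω′ − (ω_J·B)f)
one has B̌·ω̌ = 0, hence Z(μ(σ₀)) = (exp(B̌+iω̌),(1,0,1)) = −1 − ½(B̌² − ω̌²)
is real and Z(μ(f)) = (exp(B̌+iω̌),(0,0,−1)) = 1. -/

noncomputable section

variable {V : Type*}

/-- The ℂ-bilinear extension of a real bilinear form to the complexification. -/
def Bc [AddCommGroup V] [Module ℝ V] (b : LinearMap.BilinForm ℝ V) (z w : V × V) : ℂ :=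
  ⟨b z.1 w.1 - b z.2 w.2, b z.1 w.2 + b z.2 w.1⟩

/-- The Mukai pairing of a complexified triple with a real triple. -/
def mukaiC [AddCommGroup V] [Module ℝ V] (b : LinearMap.BilinForm ℝ V)
    (x : ℂ × (V × V) × ℂ) (y : ℝ × V × ℝ) : ℂ :=
  Bc b x.2.1 (toC y.2.1) - x.1 * ((y.2.2 : ℝ) : ℂ) - ((y.1 : ℝ) : ℂ) * x.2.2

/-- exp(z) = (1, z, ½ z·z) in the complexified Mukai lattice. -/
def cexp [AddCommGroup V] [Module ℝ V] (b : LinearMap.BilinForm ℝ V)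
    (z : V × V) : ℂ × (V × V) × ℂ :=
  (1, z, Bc b z z / 2)

/-- The form descends to `f^⊥ / ⟨f⟩`, so the multiples of `f` by which `B` corrects the mirror
classes do not affect their pairing. -/
theorem bilinForm_sub_smul_sub_smul_of_isotropic {R : Type*} [CommRing R]
    [AddCommGroup V] [Module R V] (b : LinearMap.BilinForm R V) {f x y : V} (hff : b f f = 0)
    (hxf : b x f = 0) (hfy : b f y = 0) (r s : R) :
    b (x - r • f) (y - s • f) = b x y := by
  simp [hff, hxf, hfy]

section Complexification

variable [AddCommGroup V] [Module ℝ V]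

theorem toC_add_csmul_I_toC (x y : V) : toC x + csmul Complex.I (toC y) = (x, y) := by
  simp [toC, csmul]

variable (b : LinearMap.BilinForm ℝ V)

theorem Bc_toC_zero (z : V × V) : Bc b z (toC 0) = 0 := by
  apply Complex.ext <;> simp [Bc, toC]

theorem Bc_mk_self_of_orthogonal {x y : V} (hxy : b x y = 0) (hyx : b y x = 0) :
    Bc b (x, y) (x, y) = ((b x x - b y y : ℝ) : ℂ) := by
  apply Complex.ext <;> simp [Bc, hxy, hyx]

theorem mukaiC_cexp_mk_zero (z : V × V) (r s : ℝ) :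
    mukaiC b (cexp b z) (r, 0, s) = -s - r * (Bc b z z / 2) := by
  simp [mukaiC, cexp, Bc_toC_zero]

theorem mirror_central_charge_real_hyperbolic_case_general
    (hb : b.IsRefl) {f ω ξ : V} (hff : b f f = 0) (hωf : b ω f = 0) (hfξ : b f ξ = 0)
    (hωξ : b ω ξ = 0) (c d r s : ℝ)
    (BCheck : V) (hBCheck : BCheck = c • (ω - r • f))
    (omegaCheck : V) (homega : omegaCheck = d • (ξ - s • f)) :
    b BCheck omegaCheck = 0 ∧
    mukaiC b (cexp b (toC BCheck + csmul Complex.I (toC omegaCheck))) (1, 0, 1) =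
      ((-1 - (b BCheck BCheck - b omegaCheck omegaCheck) / 2 : ℝ) : ℂ) ∧
    mukaiC b (cexp b (toC BCheck + csmul Complex.I (toC omegaCheck))) (0, 0, -1) = 1 := by
  have horth : b BCheck omegaCheck = 0 := by
    rw [hBCheck, homega, LinearMap.BilinForm.smul_left, LinearMap.BilinForm.smul_right,
      bilinForm_sub_smul_sub_smul_of_isotropic b hff hωf hfξ, hωξ, mul_zero, mul_zero]
  refine ⟨horth, ?_, ?_⟩
  · rw [toC_add_csmul_I_toC, mukaiC_cexp_mk_zero,
      Bc_mk_self_of_orthogonal b horth (hb _ _ horth)]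
    push_cast
    ring
  · simp [mukaiC_cexp_mk_zero]

end Complexification

theorem mirror_central_charge_real_hyperbolic_case
    [AddCommGroup V] [Module ℝ V]
    (b : LinearMap.BilinForm ℝ V) (hsymm : ∀ x y : V, b x y = b y x)
    (p q f σ₀ ω' Bf : V) (a₀ b₀ t : ℝ)
    (ωJ : V) (hωJ : ωJ = ω' + a₀ • f + b₀ • σ₀)
    (hff : b f f = 0) (hfσ : b f σ₀ = 1) (hσσ : b σ₀ σ₀ = -2)
    (hfp : b f p = 0) (hfq : b f q = 0) (hσp : b σ₀ p = 0) (hσq : b σ₀ q = 0)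
    (hω'f : b ω' f = 0) (hω'σ : b ω' σ₀ = 0)
    (hωJp : b ωJ p = 0) (hωJq : b ωJ q = 0)
    (hωJf : b ωJ f ≠ 0)
    (omegaCheck : V)
    (homega : omegaCheck = (1 / b ωJ f) • (q - t • p - (b (q - t • p) Bf) • f))
    (BCheck : V)
    (hBCheck : BCheck = (1 / b ωJ f) • (ω' - (b ωJ Bf) • f)) :
    b BCheck omegaCheck = 0 ∧
    mukaiC b (cexp b (toC BCheck + csmul Complex.I (toC omegaCheck))) (1, 0, 1) =
      ((-1 - (b BCheck BCheck - b omegaCheck omegaCheck) / 2 : ℝ) : ℂ) ∧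
    mukaiC b (cexp b (toC BCheck + csmul Complex.I (toC omegaCheck))) (0, 0, -1) = 1 := by
  have hω'p : b ω' p = 0 := by simpa [hωJ, hfp, hσp] using hωJp
  have hω'q : b ω' q = 0 := by simpa [hωJ, hfq, hσq] using hωJq
  exact mirror_central_charge_real_hyperbolic_case_general b
    (LinearMap.IsSymm.isRefl ⟨hsymm⟩) hff hω'f (ξ := q - t • p) (by simp [hfp, hfq])
    (by simp [hω'p, hω'q]) _ _ _ _ BCheck hBCheck omegaCheck homega

end
end
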